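/- arXiv:2009.14382 — 2 statements merged into one kernel-verified Lean document; each statement's English description precedes it below -/
import Mathlib

section
/- Let K be a field of characteristic 0, let L be a finite extension of K, and let (a_n)_{n≥0} be a rational sequence with values in L. Then the degree sequence (deg(a_n))_{n≥0}, where deg(a_n) = [K(a_n) : K], is virtually periodic. -/
/-!
The degree of `a n` is the number of its conjugates, that is, of distinct values `σ (a n)` for the
`K`-embeddings `σ` of `L` into an algebraic closure of `K`. It only depends on which of the
differences `σ (a n) - τ (a n)` vanish. Each such difference is again a rational sequence, so
everything follows from the Skolem–Mahler–Lech theorem (`skolem_mahler_lech`): in characteristic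
zero the zero set of a rational sequence is eventually periodic.

For Skolem–Mahler–Lech, a rational sequence is eventually of the form `u ⬝ᵥ A ^ n *ᵥ w` with `A`
invertible (`exists_matrix_of_isRationalSeq`). The entries of `A`, `A⁻¹`, `u`, `w` generate a
finitely generated domain over `ℤ`, and such a domain embeds into the ring of integers of an
algebraic closure of some `ℚ_[p]` (`exists_padic_embedding`): a transcendence basis is sent to
algebraically independent elements of `ℤ_[p]` close to a well-chosen integer point, at which the
leading coefficients of the algebraic equations of the generators are units.

The entries of `A` then lie in a finite extension of `ℚ_[p]`, whose unit ball is compact, so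
some power satisfies `A ^ d = 1 + p ^ 2 • C` (`exists_pow_eq_one_add`). Along a progression of
step `d` the sequence becomes `f n = ∑ i, (n.choose i) * p ^ (2 * i) * e i` with `e i` integral.
For `n ≤ k` it agrees with a polynomial whose `j`-th coefficient has norm at most `2 ^ (-j)`.
Dividing this polynomial by `X - n` for `m` zeros `n` of `f` shows `‖f x‖ ≤ 2 ^ (-m)` for all `x`;
hence infinitely many zeros force `f = 0` (`binomial_series_zero`). This is Hansel's argument,
which needs neither completeness nor power series.
-/

/-- A sequence `a : ℕ → F` is a *rational sequence* if there are polynomials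
`f, g ∈ F[x]` with `g ≠ 0` such that `g(x) * ∑ aₙ xⁿ = f(x)` as formal power series. -/
def IsRationalSeq {F : Type*} [Field F] (a : ℕ → F) : Prop :=
  ∃ f g : Polynomial F, g ≠ 0 ∧
    (g : PowerSeries F) * PowerSeries.mk a = (f : PowerSeries F)

open Polynomial

/-! ### Polynomials with many natural roots over an ultrametric field -/

/-- Synthetic division by `X - n` with `n` a natural number shifts a bound on the coefficients from
index `m + 1` on to the coefficients of the quotient from index `m` on. -/
theorem coeff_bound_div {Ω : Type*} [NormedField Ω] [IsUltrametricDist Ω]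
    (Q : Polynomial Ω) (n m : ℕ) (ε : ℝ) (hε : 0 ≤ ε)
    (h : ∀ j, m + 1 ≤ j → ‖((X - C (n : Ω)) * Q).coeff j‖ ≤ ε) :
    ∀ j, m ≤ j → ‖Q.coeff j‖ ≤ ε := by
  have key : ∀ k j, m ≤ j → Q.natDegree < j + k → ‖Q.coeff j‖ ≤ ε := by
    intro k
    induction k with
    | zero =>
      intro j _ hj
      rw [coeff_eq_zero_of_natDegree_lt (by simpa using hj)]
      simpa using hε
    | succ k ih =>
      intro j hj hk
      have h1 := h (j + 1) (by omega)
      have h2 := ih (j + 1) (by omega) (by omega)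
      have h3 : Q.coeff j = ((X - C (n : Ω)) * Q).coeff (j + 1) + (n : Ω) * Q.coeff (j + 1) := by
        rw [sub_mul, coeff_sub, coeff_X_mul, coeff_C_mul]; ring
      rw [h3]
      refine (IsUltrametricDist.norm_add_le_max _ _).trans (max_le h1 ?_)
      rw [norm_mul]
      calc _ ≤ 1 * ε := by
            gcongr
            exact IsUltrametricDist.norm_natCast_le_one Ω n
        _ = ε := one_mul _
  intro j hj
  exact key (Q.natDegree + 1) j hj (by omega)

/-- A polynomial with `m` roots in `ℕ` whose coefficients are at most `ε` from index `m` on takes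
values at most `ε` on `ℕ`: divide by the linear factors one at a time. -/
theorem eval_bound_of_roots {Ω : Type*} [NormedField Ω] [CharZero Ω] [IsUltrametricDist Ω]
    (ε : ℝ) (hε : 0 ≤ ε) (T : Finset ℕ) :
    ∀ P : Polynomial Ω, (∀ j, T.card ≤ j → ‖P.coeff j‖ ≤ ε) → (∀ n ∈ T, P.eval (n : Ω) = 0) →
      ∀ x : ℕ, ‖P.eval (x : Ω)‖ ≤ ε := by
  induction T using Finset.induction_on with
  | empty =>
    intro P hP _ x
    rw [eval_eq_sum_range]
    refine IsUltrametricDist.norm_sum_le_of_forall_le_of_nonneg hε fun i _ => ?_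
    rw [norm_mul, norm_pow]
    calc _ ≤ ε * 1 ^ i := by
          gcongr
          · exact hP i (by simp)
          · exact IsUltrametricDist.norm_natCast_le_one Ω x
      _ = ε := by simp
  | insert n T hn ih =>
    intro P hP hr x
    obtain ⟨Q, rfl⟩ := dvd_iff_isRoot.mpr (hr n (Finset.mem_insert_self n T))
    rw [Finset.card_insert_of_notMem hn] at hP
    have hQ := ih Q (coeff_bound_div Q n _ ε hε hP) (fun k hk => by
      have := hr k (Finset.mem_insert_of_mem hk)
      rw [eval_mul, mul_eq_zero] at this
      refine this.resolve_left ?_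
      simp only [eval_sub, eval_X, eval_C, sub_eq_zero, Nat.cast_inj]
      rintro rfl
      exact hn hk) x
    rw [eval_mul, norm_mul]
    calc _ ≤ 1 * ε := by
          gcongr
          simp only [eval_sub, eval_X, eval_C]
          rw [sub_eq_add_neg]
          refine (IsUltrametricDist.norm_add_le_max _ _).trans (max_le ?_ ?_)
          · exact IsUltrametricDist.norm_natCast_le_one Ω _
          · rw [norm_neg]
            exact IsUltrametricDist.norm_natCast_le_one Ω _
      _ = ε := one_mul _

theorem norm_pow_div_factorial_le (p : ℕ) [Fact p.Prime] (i : ℕ) :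
    ‖((p : PadicAlgCl p) ^ 2) ^ i / (i.factorial : PadicAlgCl p)‖ ≤ (1 / 2 : ℝ) ^ i := by
  have e : ((p : PadicAlgCl p) ^ 2) ^ i / (i.factorial : PadicAlgCl p) =
      algebraMap ℚ_[p] (PadicAlgCl p) (((p : ℚ_[p]) ^ 2) ^ i / (i.factorial : ℚ_[p])) := by
    simp
  rw [e, PadicAlgCl.norm_extends, norm_div, norm_pow, norm_pow]
  have hp : (2 : ℝ) ≤ p := by exact_mod_cast (Fact.out : p.Prime).two_le
  have hv : padicValNat p i.factorial ≤ i := by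
    have h := sub_one_mul_padicValNat_factorial (p := p) i
    have h2 := (Fact.out : p.Prime).two_le
    calc _ ≤ (p - 1) * padicValNat p i.factorial := Nat.le_mul_of_pos_left _ (by omega)
      _ ≤ i := by omega
  have hf : ((p : ℝ) ^ i)⁻¹ ≤ ‖(i.factorial : ℚ_[p])‖ := by
    rw [Padic.norm_eq_zpow_neg_valuation (by exact_mod_cast i.factorial_ne_zero)]
    rw [Padic.valuation_natCast, zpow_neg, zpow_natCast]
    gcongr
    linarith
  have hi : (0 : ℝ) < ((p : ℝ) ^ i)⁻¹ := by positivity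
  rw [div_le_iff₀ (hi.trans_le hf), Padic.norm_p]
  calc (((p : ℝ)⁻¹ ^ 2) ^ i) = (p : ℝ)⁻¹ ^ i * ((p : ℝ) ^ i)⁻¹ := by
        rw [← inv_pow, ← pow_mul, two_mul, pow_add]
    _ ≤ (1 / 2) ^ i * ‖(i.factorial : ℚ_[p])‖ := by
        gcongr
        rw [one_div]; gcongr

/-- The values of `∑ i, (n.choose i) * p ^ (2 * i) * e i` with integral `e i` are all zero as soon
as infinitely many of them are. -/
theorem binomial_series_zero (p : ℕ) [Fact p.Prime] (e f : ℕ → PadicAlgCl p)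
    (he : ∀ i, ‖e i‖ ≤ 1)
    (hf : ∀ n, f n = ∑ i ∈ Finset.range (n + 1), (n.choose i : PadicAlgCl p) *
      (((p : PadicAlgCl p) ^ 2) ^ i * e i))
    (hinf : {n | f n = 0}.Infinite) (x : ℕ) : f x = 0 := by
  have key : ∀ m : ℕ, ‖f x‖ ≤ (1 / 2 : ℝ) ^ m := by
    intro m
    obtain ⟨T, hT, hcard⟩ := hinf.exists_subset_card_eq m
    -- the partial sum up to `k` agrees with `f` at `x` and at all points of `T`
    set k := x + T.sup id
    let P : Polynomial (PadicAlgCl p) := ∑ i ∈ Finset.range (k + 1),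
      C (((p : (PadicAlgCl p)) ^ 2) ^ i / (i.factorial : (PadicAlgCl p)) * e i) *
        (descPochhammer ℤ i).map (Int.castRingHom (PadicAlgCl p))
    have hPe : ∀ n ≤ k, P.eval (n : (PadicAlgCl p)) = f n := by
      intro n hn
      have : ∀ i, ((descPochhammer ℤ i).map (Int.castRingHom (PadicAlgCl p))).eval (n : (PadicAlgCl p)) =
          (i.factorial : (PadicAlgCl p)) * (n.choose i : (PadicAlgCl p)) := by
        intro i
        rw [descPochhammer_map, descPochhammer_eval_eq_descFactorial,
          Nat.descFactorial_eq_factorial_mul_choose, Nat.cast_mul]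
      rw [hf, eval_finsetSum]
      symm
      refine (Finset.sum_subset (Finset.range_mono (by omega : n + 1 ≤ k + 1)) ?_).trans ?_
      · intro i _ hi
        rw [Nat.choose_eq_zero_of_lt (by simpa using hi)]; simp
      · refine Finset.sum_congr rfl fun i _ => ?_
        rw [eval_mul, eval_C, this]
        have : (i.factorial : (PadicAlgCl p)) ≠ 0 := by exact_mod_cast i.factorial_ne_zero
        field_simp
    have hPc : ∀ j, T.card ≤ j → ‖P.coeff j‖ ≤ (1 / 2 : ℝ) ^ m := by
      intro j hj
      rw [finsetSum_coeff]
      refine IsUltrametricDist.norm_sum_le_of_forall_le_of_nonneg (by positivity) fun i _ => ?_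
      rw [coeff_C_mul, coeff_map]
      by_cases hij : i < j
      · rw [coeff_eq_zero_of_natDegree_lt (by rwa [descPochhammer_natDegree])]
        simp
      · rw [norm_mul, norm_mul]
        calc _ ≤ (1 / 2 : ℝ) ^ i * 1 * 1 := by
              gcongr
              · exact norm_pow_div_factorial_le p i
              · exact he i
              · exact IsUltrametricDist.norm_intCast_le_one (PadicAlgCl p) _
          _ ≤ (1 / 2 : ℝ) ^ m := by
              rw [mul_one, mul_one]
              exact pow_le_pow_of_le_one (by norm_num) (by norm_num) (by omega)
    rw [← hPe x (by omega)]
    refine eval_bound_of_roots _ (by positivity) T P hPc (fun n hn => ?_) x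
    rw [hPe n (le_add_left (Finset.le_sup (f := id) hn))]
    exact hT hn
  have := ge_of_tendsto' (tendsto_pow_atTop_nhds_zero_of_lt_one (r := (1 / 2 : ℝ))
    (by norm_num) (by norm_num)) key
  exact norm_le_zero_iff.mp this

/-! ### Embedding finitely generated domains -/

/-- Nonempty open subsets of `ℚ_[p]` are uncountable, while the elements algebraic over a finitely
generated ring form a countable set; so algebraically independent points can be chosen one by one. -/
theorem exists_algebraicIndependent_mem_open (p : ℕ) [Fact p.Prime] (ι : Type*) [Finite ι] :
    ∀ U : ι → Set ℚ_[p], (∀ i, IsOpen (U i)) → (∀ i, (U i).Nonempty) →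
      ∃ τ : ι → ℚ_[p], AlgebraicIndependent ℤ τ ∧ ∀ i, τ i ∈ U i := by
  induction ι using Finite.induction_empty_option with
  | @of_equiv α β e ih =>
    intro U hU hU'
    obtain ⟨τ, h1, h2⟩ := ih (U ∘ e) (fun i => hU _) (fun i => hU' _)
    refine ⟨τ ∘ e.symm, h1.comp _ e.symm.injective, fun i => ?_⟩
    simpa using h2 (e.symm i)
  | h_empty =>
    intro U _ _
    refine ⟨PEmpty.elim, ?_, fun i => i.elim⟩
    rw [algebraicIndependent_empty_type_iff]
    exact RingHom.injective_int _
  | @h_option α _ ih =>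
    intro U hU hU'
    obtain ⟨τ, h1, h2⟩ := ih (fun i => U (some i)) (fun i => hU _) (fun i => hU' _)
    have hc : Countable (Algebra.adjoin ℤ (Set.range τ)) := by
      rw [Algebra.adjoin_range_eq_range_aeval]
      have : Countable (MvPolynomial α ℤ) := by
        have := Finite.to_countable (α := α)
        rw [← Cardinal.mk_le_aleph0_iff]
        refine MvPolynomial.cardinalMk_le_max_lift.trans ?_
        simp
      exact (Set.countable_range (MvPolynomial.aeval (R := ℤ) τ)).to_subtype
    have hnot : ∃ y ∈ U none, Transcendental (Algebra.adjoin ℤ (Set.range τ)) y := by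
      by_contra! hcon
      have hsub : U none ⊆ {x | IsAlgebraic (Algebra.adjoin ℤ (Set.range τ)) x} := by
        intro y hy
        by_contra h
        exact hcon y hy h
      have h3 := (Algebraic.countable (Algebra.adjoin ℤ (Set.range τ)) ℚ_[p]).mono hsub
      have h4 := continuum_le_cardinal_of_isOpen ℚ_[p] (hU none) (hU' none)
      exact absurd (h4.trans h3.le_aleph0) (not_le.mpr Cardinal.aleph0_lt_continuum)
    obtain ⟨y, hy, hy'⟩ := hnot
    refine ⟨fun o => o.elim y τ, AlgebraicIndependent.option_iff.mpr ⟨h1, hy'⟩, ?_⟩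
    rintro (_ | i)
    · exact hy
    · exact h2 i

/-- Integer polynomials respect congruence modulo the maximal ideal of `ℤ_[p]`. -/
theorem norm_aeval_sub_lt (p : ℕ) [Fact p.Prime] {ι : Type*} (t₀ : ι → ℤ) (τ : ι → ℚ_[p])
    (h : ∀ i, ‖τ i - t₀ i‖ < 1) (P : MvPolynomial ι ℤ) :
    ‖MvPolynomial.aeval τ P - (MvPolynomial.aeval t₀ P : ℤ)‖ < 1 ∧
      ‖MvPolynomial.aeval τ P‖ ≤ 1 := by
  have aux : ∀ (x : ℚ_[p]) (m : ℤ), ‖x - m‖ < 1 → ‖x‖ ≤ 1 := by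
    intro x m hx
    have := (IsUltrametricDist.norm_add_le_max (x - m) (m : ℚ_[p]))
    rw [sub_add_cancel] at this
    exact this.trans (max_le hx.le (Padic.norm_int_le_one m))
  suffices h : ‖MvPolynomial.aeval τ P - (MvPolynomial.aeval t₀ P : ℤ)‖ < 1 from ⟨h, aux _ _ h⟩
  induction P using MvPolynomial.induction_on with
  | C a => simp
  | add P Q hP hQ =>
    have : MvPolynomial.aeval τ (P + Q) - ((MvPolynomial.aeval t₀ (P + Q) : ℤ) : ℚ_[p]) =
      (MvPolynomial.aeval τ P - (MvPolynomial.aeval t₀ P : ℤ)) +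
      (MvPolynomial.aeval τ Q - (MvPolynomial.aeval t₀ Q : ℤ)) := by
        rw [map_add, map_add]; push_cast; ring
    rw [this]
    exact (IsUltrametricDist.norm_add_le_max _ _).trans_lt (max_lt hP hQ)
  | mul_X P i hP =>
    have : MvPolynomial.aeval τ (P * .X i) - ((MvPolynomial.aeval t₀ (P * .X i) : ℤ) : ℚ_[p]) =
      (MvPolynomial.aeval τ P - (MvPolynomial.aeval t₀ P : ℤ)) * τ i +
      ((MvPolynomial.aeval t₀ P : ℤ) : ℚ_[p]) * (τ i - t₀ i) := by
        rw [map_mul, map_mul]; simp only [MvPolynomial.aeval_X]; push_cast; ring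
    rw [this]
    refine (IsUltrametricDist.norm_add_le_max _ _).trans_lt (max_lt ?_ ?_)
    · rw [norm_mul]
      exact mul_lt_one_of_nonneg_of_lt_one_left (norm_nonneg _) hP (aux _ _ (h i))
    · rw [norm_mul]
      exact mul_lt_one_of_nonneg_of_lt_one_right (Padic.norm_int_le_one _) (norm_nonneg _) (h i)

theorem norm_root_le_one {Ω : Type*} [NormedField Ω] [IsUltrametricDist Ω] (q : Polynomial Ω)
    (hq : ∀ i, ‖q.coeff i‖ ≤ 1) (hl : ‖q.leadingCoeff‖ = 1) (y : Ω) (hy : q.eval y = 0) :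
    ‖y‖ ≤ 1 := by
  by_contra! hcon
  rw [eval_eq_sum_range, Finset.sum_range_succ, coeff_natDegree] at hy
  have h1 : ‖∑ i ∈ Finset.range q.natDegree, q.coeff i * y ^ i‖ = ‖y‖ ^ q.natDegree := by
    rw [eq_neg_of_add_eq_zero_left hy, norm_neg, norm_mul, norm_pow, hl, one_mul]
  rcases Nat.eq_zero_or_pos q.natDegree with h0 | h0
  · rw [h0] at h1; simp at h1
  · have h2 : ‖∑ i ∈ Finset.range q.natDegree, q.coeff i * y ^ i‖ ≤ ‖y‖ ^ (q.natDegree - 1) := by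
      refine IsUltrametricDist.norm_sum_le_of_forall_le_of_nonneg (by positivity) fun i hi => ?_
      rw [norm_mul, norm_pow]
      calc _ ≤ 1 * ‖y‖ ^ i := by gcongr; exact hq i
        _ ≤ ‖y‖ ^ (q.natDegree - 1) := by
          rw [one_mul]
          exact pow_le_pow_right₀ hcon.le (by have := Finset.mem_range.mp hi; omega)
    rw [h1] at h2
    exact absurd h2 (not_le.mpr (pow_lt_pow_right₀ hcon (by omega)))

/-- A variant of Cassels' embedding theorem: a finitely generated domain of characteristic zero
embeds into the integers of an algebraic closure of `ℚ_[p]` for some `p`. -/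
theorem exists_padic_embedding {R : Type*} [CommRing R] [IsDomain R] [CharZero R]
    (S : Finset R) (hS : Algebra.adjoin ℤ (S : Set R) = ⊤) :
    ∃ (p : ℕ) (_ : Fact p.Prime) (φ : R →+* PadicAlgCl p), Function.Injective φ ∧
      ∀ x, ‖φ x‖ ≤ 1 := by
  have hfaith : FaithfulSMul ℤ R :=
    (faithfulSMul_iff_algebraMap_injective ℤ R).mpr (RingHom.injective_int _)
  have halg : Algebra.IsAlgebraic (Algebra.adjoin ℤ (S : Set R)) R := by
    refine ⟨fun x => ?_⟩
    have hx : x ∈ Algebra.adjoin ℤ (S : Set R) := hS ▸ Algebra.mem_top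
    exact isAlgebraic_algebraMap (⟨x, hx⟩ : Algebra.adjoin ℤ (S : Set R))
  obtain ⟨t, htS, ht⟩ := exists_isTranscendenceBasis_subset (R := ℤ) (S : Set R)
  have htfin : Finite t := (S.finite_toSet.subset htS).to_subtype
  have hAlg := ht.isAlgebraic
  set A := Algebra.adjoin ℤ (Set.range ((↑) : t → R)) with hA
  let E : MvPolynomial t ℤ ≃ₐ[ℤ] A := ht.1.aevalEquiv
  have hq : ∀ s : R, ∃ q : Polynomial A, q ≠ 0 ∧ aeval s q = 0 := fun s => hAlg.isAlgebraic s
  choose q hq0 hqs using hq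
  -- wherever `G` specializes to a unit, all `s ∈ S` become integral
  let G : MvPolynomial t ℤ := ∏ s ∈ S, E.symm (q s).leadingCoeff
  have hG : G ≠ 0 := Finset.prod_ne_zero_iff.mpr fun s _ => by
    simpa using hq0 s
  obtain ⟨t₀, ht₀⟩ : ∃ t₀ : t → ℤ, MvPolynomial.eval t₀ G ≠ 0 := by
    by_contra! hcon
    exact hG (MvPolynomial.funext (by simpa using hcon))
  obtain ⟨p, hp1, hp2⟩ := Nat.exists_infinite_primes ((MvPolynomial.eval t₀ G).natAbs + 1)
  have hpG : ¬ (p : ℤ) ∣ MvPolynomial.eval t₀ G := by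
    intro h
    have := Nat.le_of_dvd (Int.natAbs_pos.mpr ht₀) (Int.natCast_dvd.mp h)
    omega
  have : Fact p.Prime := ⟨hp2⟩
  obtain ⟨τ, hτ, hτ'⟩ := exists_algebraicIndependent_mem_open p t
    (fun i => Metric.ball (t₀ i : ℚ_[p]) 1) (fun i => Metric.isOpen_ball)
    (fun i => ⟨_, Metric.mem_ball_self one_pos⟩)
  have hnorm := norm_aeval_sub_lt p t₀ τ (fun i => by simpa [dist_eq_norm] using hτ' i)
  let ψ : A →+* PadicAlgCl p := (algebraMap ℚ_[p] (PadicAlgCl p)).comp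
    ((MvPolynomial.aeval (R := ℤ) τ).toRingHom.comp E.symm.toRingEquiv.toRingHom)
  have hψ : ∀ x, ψ x = algebraMap ℚ_[p] (PadicAlgCl p) (MvPolynomial.aeval τ (E.symm x)) :=
    fun _ => rfl
  have hψinj : Function.Injective ψ :=
    (algebraMap ℚ_[p] (PadicAlgCl p)).injective.comp
      ((show Function.Injective (MvPolynomial.aeval (R := ℤ) τ) from hτ).comp E.symm.injective)
  have hψle : ∀ x, ‖ψ x‖ ≤ 1 := fun x => by
    rw [hψ, PadicAlgCl.norm_extends]; exact (hnorm _).2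
  let : Algebra A (PadicAlgCl p) := ψ.toAlgebra
  have : Module.IsTorsionFree A (PadicAlgCl p) := by
    have : FaithfulSMul A (PadicAlgCl p) := (faithfulSMul_iff_algebraMap_injective _ _).mpr hψinj
    infer_instance
  let φ : R →ₐ[A] PadicAlgCl p := IsAlgClosed.lift
  have hφA : ∀ x : A, φ (algebraMap A R x) = ψ x := fun x => φ.commutes x
  refine ⟨p, ‹_›, φ.toRingHom, ?_, ?_⟩
  -- a nonzero kernel would meet `A` nontrivially, as `R` is algebraic over `A`
  · rw [injective_iff_map_eq_zero]
    intro x hx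
    by_contra hx0
    refine Ideal.comap_ne_bot_of_algebraic_mem (R := A) (I := RingHom.ker φ.toRingHom) hx0 hx
      (hAlg.isAlgebraic x) ?_
    rw [eq_bot_iff]
    intro a ha
    have ha' : φ (algebraMap A R a) = 0 := ha
    rw [hφA] at ha'
    exact (map_eq_zero_iff ψ hψinj).mp ha'
  · have hSle : ∀ s ∈ S, ‖φ s‖ ≤ 1 := by
      intro s hs
      refine norm_root_le_one ((q s).map ψ) (fun i => by rw [coeff_map]; exact hψle _) ?_ _ ?_
      · rw [leadingCoeff_map_of_injective hψinj, hψ, PadicAlgCl.norm_extends]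
        set P := E.symm (q s).leadingCoeff with hP
        have hPG : P ∣ G := Finset.dvd_prod_of_mem (fun s => E.symm (q s).leadingCoeff) hs
        have h1 : ¬ (p : ℤ) ∣ MvPolynomial.aeval t₀ P := fun h => hpG
          (h.trans (by simpa using map_dvd (MvPolynomial.eval t₀) hPG))
        have h2 : ‖((MvPolynomial.aeval t₀ P : ℤ) : ℚ_[p])‖ = 1 := by
          refine le_antisymm (Padic.norm_int_le_one _) (not_lt.mp fun h => h1 ?_)
          exact Padic.norm_intCast_lt_one_iff.mp h
        rw [← h2]
        refine Padic.norm_eq_of_norm_sub_lt_right ?_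
        rw [h2]
        exact (hnorm P).1
      · have := congrArg φ (hqs s)
        rw [map_zero, ← aeval_algHom_apply] at this
        rw [eval_map]
        exact this
    intro x
    have hx : x ∈ Algebra.adjoin ℤ (S : Set R) := hS ▸ Algebra.mem_top
    change ‖φ x‖ ≤ 1
    induction hx using Algebra.adjoin_induction with
    | mem s hs => exact hSle s hs
    | algebraMap r =>
      simp only [algebraMap_int_eq, eq_intCast, map_intCast]
      exact IsUltrametricDist.norm_intCast_le_one _ r
    | add x y _ _ hx hy =>
      rw [map_add]
      exact (IsUltrametricDist.norm_add_le_max _ _).trans (max_le hx hy)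
    | mul x y _ _ hx hy =>
      rw [map_mul, norm_mul]
      exact mul_le_one₀ hx (norm_nonneg _) hy

/-! ### Zeros of sequences given by matrix powers -/

/-- The ring of integers of the algebraic closure of `ℚ_[p]`: the elements of norm at most `1`. -/
def padicAlgInt (p : ℕ) [Fact p.Prime] : Subring (PadicAlgCl p) where
  carrier := {x | ‖x‖ ≤ 1}
  one_mem' := norm_one.le
  zero_mem' := norm_zero.le.trans zero_le_one
  mul_mem' {x y} hx hy := by
    change ‖x * y‖ ≤ 1
    rw [norm_mul]
    exact mul_le_one₀ hx (norm_nonneg _) hy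
  add_mem' {x y} hx hy :=
    (IsUltrametricDist.norm_add_le_max x y).trans (max_le hx hy)
  neg_mem' {x} hx := by
    change ‖-x‖ ≤ 1
    rw [norm_neg]
    exact hx

/-- The powers of `A` stay in a compact set, so two of them are congruent modulo `p ^ 2`, and the
earlier one can be cancelled because `A` is invertible. -/
theorem exists_pow_eq_one_add (p : ℕ) [Fact p.Prime] {m : Type*} [Fintype m] [DecidableEq m]
    (A B : Matrix m m (padicAlgInt p)) (hBA : B * A = 1) :
    ∃ d : ℕ, 0 < d ∧ ∃ C : Matrix m m (padicAlgInt p),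
      A ^ d = 1 + ((p : padicAlgInt p) ^ 2) • C := by
  let W : IntermediateField ℚ_[p] (PadicAlgCl p) :=
    IntermediateField.adjoin ℚ_[p] (Set.range fun ij : m × m => (A ij.1 ij.2 : PadicAlgCl p))
  have hfin : FiniteDimensional ℚ_[p] W :=
    IntermediateField.finiteDimensional_adjoin fun x _ => Algebra.IsIntegral.isIntegral x
  let W' : Submodule ℚ_[p] (PadicAlgCl p) := Subalgebra.toSubmodule W.toSubalgebra
  have hfin' : FiniteDimensional ℚ_[p] W' := hfin
  have hproper : ProperSpace W' := FiniteDimensional.proper ℚ_[p] W'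
  have hmem : ∀ n i j, ((A ^ n) i j : PadicAlgCl p) ∈ W := by
    intro n
    induction n with
    | zero =>
      intro i j
      rw [pow_zero, Matrix.one_apply]
      split_ifs
      · exact W.one_mem
      · exact W.zero_mem
    | succ n ih =>
      intro i j
      rw [pow_succ, Matrix.mul_apply]
      push_cast
      refine sum_mem fun k _ => mul_mem (ih i k) ?_
      exact IntermediateField.subset_adjoin _ _ ⟨(k, j), rfl⟩
  let s : ℕ → m → m → W' := fun n i j => ⟨((A ^ n) i j : PadicAlgCl p), hmem n i j⟩
  have hs : ∀ n, s n ∈ Metric.closedBall (0 : m → m → W') 1 := by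
    intro n
    rw [mem_closedBall_zero_iff]
    refine (pi_norm_le_iff_of_nonneg zero_le_one).mpr fun i =>
      (pi_norm_le_iff_of_nonneg zero_le_one).mpr fun j => ?_
    exact ((A ^ n) i j).2
  obtain ⟨a, -, φ, hφ, hlim⟩ := (isCompact_closedBall (0 : m → m → W') 1).tendsto_subseq hs
  have hp0 : (p : PadicAlgCl p) ≠ 0 := by exact_mod_cast (Fact.out : p.Prime).ne_zero
  have hpos : 0 < ‖(p : PadicAlgCl p) ^ 2‖ := norm_pos_iff.mpr (pow_ne_zero _ hp0)
  obtain ⟨N, hN⟩ := Metric.cauchySeq_iff.mp hlim.cauchySeq _ hpos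
  have hlt : φ N < φ (N + 1) := hφ (Nat.lt_succ_self N)
  have hclose : ∀ i j, ‖((A ^ φ (N + 1)) i j : PadicAlgCl p) - ((A ^ φ N) i j : PadicAlgCl p)‖ ≤
      ‖(p : PadicAlgCl p) ^ 2‖ := by
    intro i j
    have h1 := hN (N + 1) (by omega) N le_rfl
    have h2 := (dist_le_pi_dist (s (φ (N + 1)) i) (s (φ N) i) j).trans
      (dist_le_pi_dist (s (φ (N + 1))) (s (φ N)) i)
    have h3 := h2.trans h1.le
    rwa [dist_eq_norm] at h3
  let D : Matrix m m (padicAlgInt p) := fun i j =>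
    ⟨(((A ^ φ (N + 1)) i j : PadicAlgCl p) - ((A ^ φ N) i j : PadicAlgCl p)) /
      (p : PadicAlgCl p) ^ 2, by
        change ‖_‖ ≤ (1 : ℝ)
        rw [norm_div]
        exact div_le_one_of_le₀ (hclose i j) (norm_nonneg _)⟩
  have hD : A ^ φ (N + 1) = A ^ φ N + ((p : padicAlgInt p) ^ 2) • D := by
    ext i j
    change ((A ^ φ (N + 1)) i j : PadicAlgCl p) = ((A ^ φ N) i j : PadicAlgCl p) +
      (p : PadicAlgCl p) ^ 2 * ((((A ^ φ (N + 1)) i j : PadicAlgCl p) -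
        ((A ^ φ N) i j : PadicAlgCl p)) / (p : PadicAlgCl p) ^ 2)
    rw [mul_div_cancel₀ _ (pow_ne_zero 2 hp0)]
    ring
  refine ⟨φ (N + 1) - φ N, by omega, B ^ φ N * D, ?_⟩
  have hinv : B ^ φ N * A ^ φ N = 1 := by
    have hAB : A * B = 1 := mul_eq_one_comm.mp hBA
    have hc : Commute B A := by rw [Commute, SemiconjBy, hBA, hAB]
    rw [← hc.mul_pow, hBA, one_pow]
  calc A ^ (φ (N + 1) - φ N) = B ^ φ N * A ^ φ N * A ^ (φ (N + 1) - φ N) := by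
        rw [hinv, one_mul]
    _ = B ^ φ N * A ^ φ (N + 1) := by
        rw [mul_assoc, ← pow_add, Nat.add_sub_cancel' hlt.le]
    _ = 1 + ((p : padicAlgInt p) ^ 2) • (B ^ φ N * D) := by
        rw [hD, mul_add, hinv, Matrix.mul_smul]

theorem matrix_zeros_padicAlgInt (p : ℕ) [Fact p.Prime] {m : Type*} [Fintype m] [DecidableEq m]
    (A B : Matrix m m (padicAlgInt p)) (hBA : B * A = 1) (u w : m → padicAlgInt p) :
    ∃ d : ℕ, 0 < d ∧ ∀ r, {n | u ⬝ᵥ (A ^ (r + d * n)).mulVec w = 0}.Infinite →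
      ∀ n, u ⬝ᵥ (A ^ (r + d * n)).mulVec w = 0 := by
  obtain ⟨d, hd, C, hC⟩ := exists_pow_eq_one_add p A B hBA
  refine ⟨d, hd, fun r hinf n => ?_⟩
  let e : ℕ → padicAlgInt p := fun i => u ⬝ᵥ (A ^ r * C ^ i).mulVec w
  have hexp : ∀ n, u ⬝ᵥ (A ^ (r + d * n)).mulVec w =
      ∑ i ∈ Finset.range (n + 1), (n.choose i : padicAlgInt p) *
        (((p : padicAlgInt p) ^ 2) ^ i * e i) := by
    intro n
    rw [pow_add, pow_mul, hC, add_comm, (Commute.one_right _).add_pow, Finset.mul_sum,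
      Matrix.sum_mulVec, dotProduct_sum]
    refine Finset.sum_congr rfl fun i _ => ?_
    have : A ^ r * ((((p : padicAlgInt p) ^ 2) • C) ^ i * 1 ^ (n - i) *
        (n.choose i : Matrix m m (padicAlgInt p))) =
        ((n.choose i : padicAlgInt p) * ((p : padicAlgInt p) ^ 2) ^ i) • (A ^ r * C ^ i) := by
      rw [one_pow, mul_one, _root_.smul_pow, (Nat.cast_commute _ _).symm.eq, ← nsmul_eq_mul,
        ← Nat.cast_smul_eq_nsmul (padicAlgInt p), smul_smul, Matrix.mul_smul]
    rw [this, Matrix.smul_mulVec, dotProduct_smul, smul_eq_mul, mul_assoc]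
  have := binomial_series_zero p (fun i => (e i : PadicAlgCl p))
    (fun n => ((u ⬝ᵥ (A ^ (r + d * n)).mulVec w : padicAlgInt p) : PadicAlgCl p))
    (fun i => (e i).2) (fun n => by rw [hexp]; push_cast; rfl)
    (hinf.mono fun n (hn : _ = 0) => by
      simp only [Set.mem_ofPred_eq, hn]; rfl) n
  exact Subtype.ext this

theorem dotProduct_pow_mulVec_map_eq_zero_iff {R Q : Type*} [CommRing R] [CommRing Q]
    (θ : R →+* Q) (hθ : Function.Injective θ) {m : Type*} [Fintype m] [DecidableEq m]
    (A : Matrix m m R) (u w : m → R) (n : ℕ) :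
    (θ ∘ u) ⬝ᵥ ((A.map θ) ^ n).mulVec (θ ∘ w) = 0 ↔ u ⬝ᵥ (A ^ n).mulVec w = 0 := by
  rw [← map_eq_zero_iff θ hθ, RingHom.map_dotProduct, ← Matrix.map_pow]
  have h : θ ∘ (A ^ n).mulVec w = ((A ^ n).map θ).mulVec (θ ∘ w) :=
    funext fun i => RingHom.map_mulVec θ _ _ i
  rw [h]

/-- The Skolem–Mahler–Lech theorem for matrix powers: on each residue class modulo `d`, the
sequence vanishes finitely often or identically. -/
theorem matrix_zeros {F : Type*} [Field F] [CharZero F] {m : Type*} [Fintype m] [DecidableEq m]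
    (A B : Matrix m m F) (hBA : B * A = 1) (u w : m → F) :
    ∃ d : ℕ, 0 < d ∧ ∀ r, {n | u ⬝ᵥ (A ^ (r + d * n)).mulVec w = 0}.Infinite →
      ∀ n, u ⬝ᵥ (A ^ (r + d * n)).mulVec w = 0 := by
  classical
  let S : Set F := (Set.range fun ij : m × m => A ij.1 ij.2) ∪
    (Set.range fun ij : m × m => B ij.1 ij.2) ∪ Set.range u ∪ Set.range w
  have hSfin : S.Finite := (((Set.finite_range _).union (Set.finite_range _)).union
    (Set.finite_range _)).union (Set.finite_range _)
  let R := Algebra.adjoin ℤ S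
  have hsub : S ⊆ R := Algebra.subset_adjoin
  let T : Set R := ((↑) : R → F) ⁻¹' S
  have hTfin : T.Finite := hSfin.preimage Subtype.val_injective.injOn
  have hT : Algebra.adjoin ℤ (hTfin.toFinset : Set R) = ⊤ := by
    rw [hTfin.coe_toFinset]
    exact Algebra.adjoin_adjoin_coe_preimage
  obtain ⟨p, _, φ, hφ, hφ1⟩ := exists_padic_embedding hTfin.toFinset hT
  let ψ : R →+* padicAlgInt p := φ.codRestrict (padicAlgInt p) hφ1
  have hψ : Function.Injective ψ := fun x y h => hφ (congrArg Subtype.val h)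
  let A₀ : Matrix m m R := fun i j => ⟨A i j, hsub (.inl (.inl (.inl ⟨(i, j), rfl⟩)))⟩
  let B₀ : Matrix m m R := fun i j => ⟨B i j, hsub (.inl (.inl (.inr ⟨(i, j), rfl⟩)))⟩
  let u₀ : m → R := fun i => ⟨u i, hsub (.inl (.inr ⟨i, rfl⟩))⟩
  let w₀ : m → R := fun i => ⟨w i, hsub (.inr ⟨i, rfl⟩)⟩
  let ι : R →+* F := R.val.toRingHom
  have hι : Function.Injective ι := Subtype.val_injective
  have hBA₀ : B₀ * A₀ = 1 := by
    have h : (B₀ * A₀).map ι = (1 : Matrix m m R).map ι := by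
      rw [Matrix.map_mul, Matrix.map_one _ (map_zero ι) (map_one ι)]
      exact hBA
    exact Matrix.map_injective hι h
  have h1 : ∀ n, u ⬝ᵥ (A ^ n).mulVec w = 0 ↔ u₀ ⬝ᵥ (A₀ ^ n).mulVec w₀ = 0 :=
    fun n => dotProduct_pow_mulVec_map_eq_zero_iff ι hι A₀ u₀ w₀ n
  have h2 := dotProduct_pow_mulVec_map_eq_zero_iff ψ hψ A₀ u₀ w₀
  obtain ⟨d, hd, h⟩ := matrix_zeros_padicAlgInt p (A₀.map ψ) (B₀.map ψ)
    (by rw [← Matrix.map_mul, hBA₀, Matrix.map_one _ (map_zero ψ) (map_one ψ)])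
    (ψ ∘ u₀) (ψ ∘ w₀)
  refine ⟨d, hd, ?_⟩
  simpa only [h1, h2] using h

/-! ### Rational sequences and the Skolem–Mahler–Lech theorem -/

/-- Past the degree of the numerator a rational sequence satisfies a linear recurrence. Cutting the
denominator at its lowest and highest nonzero coefficients makes the companion matrix invertible. -/
theorem exists_matrix_of_isRationalSeq {F : Type*} [Field F] (a : ℕ → F) (ha : IsRationalSeq a) :
    ∃ (N k : ℕ) (A B : Matrix (Fin k) (Fin k) F) (u w : Fin k → F), B * A = 1 ∧
      ∀ n, a (N + n) = u ⬝ᵥ (A ^ n).mulVec w := by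
  obtain ⟨f, g, hg, hfg⟩ := ha
  set e := g.natTrailingDegree with he
  set D := g.natDegree with hD
  have heD : e ≤ D := natTrailingDegree_le_natDegree g
  have hge : g.coeff e ≠ 0 := trailingCoeff_nonzero_iff_nonzero.mpr hg
  have hgD : g.coeff D ≠ 0 := leadingCoeff_ne_zero.mpr hg
  set M := f.natDegree + 1 with hM
  obtain ⟨k, hk⟩ := Nat.exists_eq_add_of_le heD
  have hrec : ∀ n, ∑ l ∈ Finset.range (k + 1), g.coeff (D - l) * a (M + n + l) = 0 := by
    intro n
    have h1 := congrArg (PowerSeries.coeff (M + n + D)) hfg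
    rw [PowerSeries.coeff_mul, Polynomial.coeff_coe,
      coeff_eq_zero_of_natDegree_lt (p := f) (by omega),
      Finset.Nat.sum_antidiagonal_eq_sum_range_succ_mk] at h1
    simp only [Polynomial.coeff_coe, PowerSeries.coeff_mk] at h1
    rw [← h1]
    refine Finset.sum_bij_ne_zero (fun l _ _ => D - l) ?_ ?_ ?_ ?_
    · intro l hl _
      simp only [Finset.mem_range] at hl ⊢
      omega
    · intro l hl _ l' hl' _ h
      simp only [Finset.mem_range] at hl hl'
      omega
    · intro i hi hne
      have hi1 : g.coeff i ≠ 0 := left_ne_zero_of_mul hne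
      have hi2 : i ≤ D := le_natDegree_of_ne_zero hi1
      have hi3 : e ≤ i := natTrailingDegree_le_of_ne_zero hi1
      refine ⟨D - i, by simp only [Finset.mem_range]; omega, ?_, by omega⟩
      rwa [show D - (D - i) = i by omega, show M + n + (D - i) = M + n + D - i by omega]
    · intro l hl _
      simp only [Finset.mem_range] at hl
      rw [show M + n + D - (D - l) = M + n + l by omega]
  let E : LinearRecurrence F := ⟨k, fun l => -(g.coeff (D - l) / g.coeff e)⟩
  let b : ℕ → F := fun n => a (M + n)
  have hb : ∀ n, b (n + k) = ∑ l : Fin k, E.coeffs l * b (n + l) := by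
    intro n
    have h1 := hrec n
    rw [Finset.sum_range_succ, show D - k = e by omega, ← Fin.sum_univ_eq_sum_range
      (fun l => g.coeff (D - l) * a (M + n + l))] at h1
    have h2 : g.coeff e * b (n + k) = g.coeff e * ∑ l : Fin k, E.coeffs l * b (n + l) := by
      rw [Finset.mul_sum]
      simp only [b, E, ← add_assoc]
      rw [eq_neg_of_add_eq_zero_right h1, ← Finset.sum_neg_distrib]
      refine Finset.sum_congr rfl fun l _ => ?_
      field_simp
    exact mul_left_cancel₀ hge h2
  let T : (Fin k → F) →ₗ[F] (Fin k → F) := E.tupleSucc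
  have hTapp : ∀ X i, T X i =
      if h : (i : ℕ) + 1 < k then X ⟨i + 1, h⟩ else ∑ l, E.coeffs l * X l := fun _ _ => rfl
  have hinj : LinearMap.ker T = ⊥ := by
    rw [LinearMap.ker_eq_bot']
    intro X hX
    have hsucc : ∀ i (h : i + 1 < k), X ⟨i + 1, h⟩ = 0 := by
      intro i h
      have := congrFun hX ⟨i, by omega⟩
      rwa [hTapp, dif_pos h] at this
    ext ⟨i, hi⟩
    rcases i with _ | i
    · have h1 := congrFun hX ⟨k - 1, by omega⟩
      rw [hTapp, dif_neg (by simp only; omega), Finset.sum_eq_single ⟨0, hi⟩] at h1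
      · refine (mul_eq_zero.mp h1).resolve_left ?_
        simp only [E, Nat.sub_zero]
        exact neg_ne_zero.mpr (div_ne_zero hgD hge)
      · rintro ⟨l, hl⟩ _ hne
        rcases l with _ | l
        · exact absurd rfl hne
        · rw [hsucc l hl, mul_zero]
      · simp
    · exact hsucc i hi
  have hunit : IsUnit (LinearMap.toMatrixAlgEquiv' T) :=
    ((LinearMap.isUnit_iff_ker_eq_bot T).mpr hinj).map LinearMap.toMatrixAlgEquiv'
  obtain ⟨B, hB⟩ := hunit.exists_left_inv
  let w : Fin k → F := fun i => b i
  have hpow : ∀ n, ((LinearMap.toMatrixAlgEquiv' T) ^ n).mulVec w =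
      fun i : Fin k => b (n + i) := by
    intro n
    induction n with
    | zero => simp [w]
    | succ n ih =>
      rw [pow_succ', ← Matrix.mulVec_mulVec, ih]
      rw [← Matrix.toLinAlgEquiv'_apply, Matrix.toLinAlgEquiv'_toMatrixAlgEquiv']
      ext i
      rw [hTapp]
      split_ifs with h
      · simp only
        congr 1; omega
      · rw [← hb]
        congr 1; omega
  refine ⟨M, k, LinearMap.toMatrixAlgEquiv' T, B,
    fun i => if (i : ℕ) = 0 then 1 else 0, w, hB, fun n => ?_⟩
  rw [hpow]
  change b n = _
  -- for a recurrence of order `0` both sides vanish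
  rcases Nat.eq_zero_or_pos k with h0 | h0
  · subst h0
    simpa using hb n
  · rw [dotProduct, Finset.sum_eq_single ⟨0, h0⟩]
    · simp
    · rintro ⟨l, hl⟩ _ hne
      rw [if_neg (fun h => hne (Fin.ext h)), zero_mul]
    · simp

theorem eventually_periodic_of_progressions (P : ℕ → Prop) (d : ℕ) (hd : 0 < d)
    (h : ∀ r, {n | P (r + d * n)}.Infinite → ∀ n, P (r + d * n)) :
    ∃ N, ∀ n > N, (P (n + d) ↔ P n) := by
  have h1 : ∀ r, ∃ N, ∀ n ≥ N, (P (r + d * (n + 1)) ↔ P (r + d * n)) := by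
    intro r
    by_cases hinf : {n | P (r + d * n)}.Infinite
    · exact ⟨0, fun n _ => iff_of_true (h r hinf _) (h r hinf _)⟩
    · obtain ⟨N, hN⟩ := (Set.not_infinite.mp hinf).bddAbove
      refine ⟨N + 1, fun n hn => iff_of_false (fun hP => ?_) (fun hP => ?_)⟩
      · have := hN hP; omega
      · have := hN hP; omega
  choose N hN using h1
  refine ⟨d * ((Finset.range d).sup N + 1), fun n hn => ?_⟩
  have h2 := hN (n % d) (n / d) (by
    have h3 : N (n % d) ≤ (Finset.range d).sup N :=
      Finset.le_sup (Finset.mem_range.mpr (Nat.mod_lt n hd))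
    have h4 : (Finset.range d).sup N + 1 ≤ n / d := by
      rw [Nat.le_div_iff_mul_le hd, mul_comm]
      exact hn.le
    omega)
  rwa [mul_add, mul_one, ← add_assoc, Nat.mod_add_div] at h2

/-- The **Skolem–Mahler–Lech theorem**: the zero set of a rational sequence over a field of
characteristic zero is eventually periodic. -/
theorem skolem_mahler_lech {F : Type*} [Field F] [CharZero F] (a : ℕ → F)
    (ha : IsRationalSeq a) :
    ∃ N d : ℕ, 0 < d ∧ ∀ n > N, (a (n + d) = 0 ↔ a n = 0) := by
  obtain ⟨M, k, A, B, u, w, hBA, hA⟩ := exists_matrix_of_isRationalSeq a ha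
  obtain ⟨d, hd, h⟩ := matrix_zeros A B hBA u w
  simp only [← hA] at h
  obtain ⟨N, hN⟩ := eventually_periodic_of_progressions (fun n => a (M + n) = 0) d hd h
  refine ⟨M + N, d, hd, fun n hn => ?_⟩
  have := hN (n - M) (by omega)
  rwa [← add_assoc, Nat.add_sub_cancel' (by omega)] at this

/-! ### Degrees as numbers of conjugates -/

theorem IsRationalSeq.map_sub_map {L Ω : Type*} [Field L] [Field Ω] (σ τ : L →+* Ω) {a : ℕ → L}
    (ha : IsRationalSeq a) : IsRationalSeq fun n => σ (a n) - τ (a n) := by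
  obtain ⟨f, g, hg, hfg⟩ := ha
  have hmap : ∀ θ : L →+* Ω, (g.map θ : PowerSeries Ω) * PowerSeries.mk (fun n => θ (a n)) =
      (f.map θ : PowerSeries Ω) := by
    intro θ
    have h := congrArg (PowerSeries.map θ) hfg
    rw [map_mul, ← Polynomial.polynomial_map_coe, ← Polynomial.polynomial_map_coe] at h
    rw [← h]
    congr 1
  refine ⟨g.map τ * f.map σ - g.map σ * f.map τ, g.map σ * g.map τ,
    mul_ne_zero (Polynomial.map_ne_zero hg) (Polynomial.map_ne_zero hg), ?_⟩
  have hsub : PowerSeries.mk (fun n => σ (a n) - τ (a n)) =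
      PowerSeries.mk (fun n => σ (a n)) - PowerSeries.mk (fun n => τ (a n)) := by
    ext n; simp
  rw [hsub, Polynomial.coe_sub, Polynomial.coe_mul, Polynomial.coe_mul, Polynomial.coe_mul,
    ← hmap σ, ← hmap τ]
  ring

theorem ncard_range_eq_of_ker_eq {X Y : Type*} (f g : X → Y)
    (h : ∀ x y, f x = f y ↔ g x = g y) : (Set.range f).ncard = (Set.range g).ncard := by
  have hker : Setoid.ker f = Setoid.ker g := Setoid.ext h
  rw [← Nat.card_coe_set_eq, ← Nat.card_coe_set_eq,
    ← Nat.card_congr (Setoid.quotientKerEquivRange f), hker,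
    Nat.card_congr (Setoid.quotientKerEquivRange g)]

theorem finrank_adjoin_eq_ncard_conjugates {K L : Type*} [Field K] [Field L] [Algebra K L]
    [CharZero K] [FiniteDimensional K L] (x : L) :
    Module.finrank K ↥(IntermediateField.adjoin K {x}) =
      (Set.range fun σ : L →ₐ[K] AlgebraicClosure K => σ x).ncard := by
  rw [IntermediateField.adjoin.finrank (Algebra.IsIntegral.isIntegral x),
    Algebra.IsAlgebraic.range_eval_eq_rootSet_minpoly, ← Nat.card_coe_set_eq,
    Nat.card_eq_fintype_card, card_rootSet_eq_natDegree (Algebra.IsSeparable.isSeparable K x)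
      (IsAlgClosed.splits _)]

theorem iff_add_mul_of_iff_add (P : ℕ → Prop) (N d : ℕ) (h : ∀ n > N, (P (n + d) ↔ P n)) (c : ℕ) :
    ∀ n > N, (P (n + d * c) ↔ P n) := by
  induction c with
  | zero => simp
  | succ c ih =>
    intro n hn
    rw [mul_add, mul_one, ← add_assoc, h _ (by omega), ih n hn]

/-- The degree sequence `[K(aₙ) : K]` of a rational sequence valued in a finite
extension `L` of a characteristic-zero field `K` is virtually periodic. -/
theorem degree_seq_virtually_periodic {K L : Type*} [Field K] [Field L]
    [Algebra K L] [CharZero K] [FiniteDimensional K L]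
    (a : ℕ → L) (ha : IsRationalSeq a) :
    ∃ N r : ℕ, 0 < r ∧ ∀ n > N,
      Module.finrank K ↥(IntermediateField.adjoin K {a (n + r)}) =
        Module.finrank K ↥(IntermediateField.adjoin K {a n}) := by
  let Emb := L →ₐ[K] AlgebraicClosure K
  have hsml : ∀ s : Emb × Emb, ∃ N d : ℕ, 0 < d ∧ ∀ n > N,
      (s.1 (a (n + d)) - s.2 (a (n + d)) = 0 ↔ s.1 (a n) - s.2 (a n) = 0) := fun s =>
    skolem_mahler_lech _ (ha.map_sub_map s.1.toRingHom s.2.toRingHom)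
  choose N d hd h using hsml
  refine ⟨Finset.univ.sup N, ∏ s, d s, Finset.prod_pos fun s _ => hd s, fun n hn => ?_⟩
  rw [finrank_adjoin_eq_ncard_conjugates, finrank_adjoin_eq_ncard_conjugates]
  refine ncard_range_eq_of_ker_eq _ _ fun σ τ => ?_
  obtain ⟨c, hc⟩ := Finset.dvd_prod_of_mem d (Finset.mem_univ (σ, τ))
  rw [hc, ← sub_eq_zero, ← sub_eq_zero (a := σ (a n))]
  exact iff_add_mul_of_iff_add (fun n => σ (a n) - τ (a n) = 0) (N (σ, τ)) (d (σ, τ))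
    (h (σ, τ)) c n ((Finset.le_sup (Finset.mem_univ (σ, τ))).trans_lt hn)
end

section
/- Let K be a field and L a finite Galois extension of K with Galois group G. Let (a_n)_{n≥0} be a sequence of elements of L such that for each σ ∈ G, the set {n ∈ ℕ : σ(a_n) = a_n} is a virtually periodic subset of ℕ, and such that for each σ ∈ G the sequence (σ(a_n))_{n≥0} is a rational sequence in L. Then the sequence (P_n(T))_{n≥0} of minimal polynomials of a_n over K is a rational sequence: there exist F ∈ (L[T])[x] and G ∈ L[x] with G ≠ 0 such that G(x)·∑_{n≥0} P_n(T) x^n = F(x) as formal power series in x over L[T]. -/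
open Polynomial

section Shift

variable {k A : Type*} [Field k] [CommRing A] [Algebra k A]

variable (k A) in
/-- The shift `(aₙ) ↦ (aₙ₊₁)` as a `k`-algebra endomorphism of the sequences in `A`. -/
def seqShift : (ℕ → A) →ₐ[k] (ℕ → A) :=
  AlgHom.ofLinearMap (LinearMap.funLeft k A Nat.succ) rfl (fun _ _ => rfl)

variable (k A) in
/-- The shift as a `k`-linear endomorphism, so that polynomials can be evaluated at it. -/
abbrev shiftEnd : Module.End k (ℕ → A) := (seqShift k A).toLinearMap

lemma shiftEnd_pow_apply (i : ℕ) (a : ℕ → A) (n : ℕ) :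
    (shiftEnd k A ^ i) a n = a (n + i) := by
  induction i generalizing n with
  | zero => rfl
  | succ i ih =>
    rw [pow_succ', Module.End.mul_apply]
    change (shiftEnd k A ^ i) a (n + 1) = _
    rw [ih]; congr 1; omega

/-- Multiplying the generating series by `g` amounts, in degrees at least `d`, to applying the
reversed polynomial `x ^ d * g (1 / x)` to the shift. -/
lemma coeff_mul_mk_eq (a : ℕ → A) (d n : ℕ) (g : k[X]) (hg : g.natDegree ≤ d) :
    PowerSeries.coeff (n + d)
      (((g.map (algebraMap k A) : A[X]) : PowerSeries A) * PowerSeries.mk a) =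
    aeval (shiftEnd k A) (reflect d g) a n := by
  refine induction_with_natDegree_le (fun g : k[X] => PowerSeries.coeff (n + d)
      (((g.map (algebraMap k A) : A[X]) : PowerSeries A) * PowerSeries.mk a) =
    aeval (shiftEnd k A) (reflect d g) a n) d (by simp) ?_ ?_ g hg
  · intro i r _ hi
    have h1 : n + d = (n + (d - i)) + i := by omega
    rw [reflect_C_mul_X_pow, revAt_le hi, aeval_mul, aeval_C, map_pow, aeval_X,
      Polynomial.map_mul, Polynomial.map_pow, map_C, map_X, coe_mul, coe_pow, coe_C, coe_X,
      mul_assoc, PowerSeries.coeff_C_mul, h1, PowerSeries.coeff_X_pow_mul, PowerSeries.coeff_mk,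
      Module.End.mul_apply, Module.algebraMap_end_apply, Pi.smul_apply, shiftEnd_pow_apply,
      Algebra.smul_def]
  · intro f g _ _ hf hgd
    rw [Polynomial.map_add, coe_add, add_mul, map_add, reflect_add, map_add,
      LinearMap.add_apply, Pi.add_apply, hf, hgd]

/-- The sequence `a` satisfies a linear recurrence with constant coefficients in `k`: some nonzero
polynomial in the shift annihilates it. The polynomial may be divisible by `X`, so the recurrence
need only hold from some index on. -/
def IsRecurrent (k : Type*) {A : Type*} [Field k] [CommRing A] [Algebra k A] (a : ℕ → A) : Prop :=
  ∃ q : k[X], q ≠ 0 ∧ aeval (shiftEnd k A) q a = 0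

lemma isRecurrent_iff_powerSeries (a : ℕ → A) : IsRecurrent k a ↔
    ∃ f : A[X], ∃ g : k[X], g ≠ 0 ∧
      ((g.map (algebraMap k A) : A[X]) : PowerSeries A) * PowerSeries.mk a = f := by
  constructor
  · rintro ⟨q, hq, h⟩
    refine ⟨PowerSeries.trunc q.natDegree (((q.reverse.map (algebraMap k A) : A[X]) :
      PowerSeries A) * PowerSeries.mk a), q.reverse, by simpa using hq, ?_⟩
    ext m
    rw [Polynomial.coeff_coe, PowerSeries.coeff_trunc]
    split_ifs with hm
    · rfl
    · obtain ⟨n, rfl⟩ := Nat.exists_eq_add_of_le' (not_lt.1 hm)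
      have hrev : reflect q.natDegree q.reverse = q := by
        ext i
        rw [reverse, coeff_reflect, coeff_reflect, revAt_invol]
      rw [coeff_mul_mk_eq a _ n _ (reverse_natDegree_le q), hrev, h]
      rfl
  · rintro ⟨f, g, hg, h⟩
    refine ⟨reflect (g.natDegree + f.natDegree + 1) g, by simpa using hg, ?_⟩
    ext n
    rw [← coeff_mul_mk_eq a _ n g (by omega), h, Polynomial.coeff_coe]
    exact coeff_eq_zero_of_natDegree_lt (by omega)

/-- Recurrence as finiteness: the subspace spanned by all shifts of `a` is a quotient of `k[X] / q`,
and conversely the characteristic polynomial of the shift on `W` annihilates `a`. -/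
lemma isRecurrent_iff_submodule (a : ℕ → A) : IsRecurrent k a ↔
    ∃ W : Submodule k (ℕ → A), W.FG ∧ W.map (shiftEnd k A) ≤ W ∧ a ∈ W := by
  constructor
  · rintro ⟨q, hq, h⟩
    let φ : k[X] →ₗ[k] (ℕ → A) := (LinearMap.applyₗ a).comp (aeval (shiftEnd k A)).toLinearMap
    have hφ (p : k[X]) : φ p = aeval (shiftEnd k A) p a := rfl
    have hle : LinearMap.range φ ≤ (degreeLT k q.natDegree).map φ := by
      rintro _ ⟨p, rfl⟩
      refine ⟨p % q, ?_, ?_⟩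
      · rw [SetLike.mem_coe, mem_degreeLT, ← degree_eq_natDegree hq]
        exact EuclideanDomain.mod_lt p hq
      · conv_rhs => rw [← EuclideanDomain.div_add_mod p q]
        rw [map_add, mul_comm, hφ (_ * _), map_mul, Module.End.mul_apply, h, map_zero, zero_add]
    refine ⟨LinearMap.range φ, ?_, ?_, 1, by simp [hφ]⟩
    · have : Module.Finite k (degreeLT k q.natDegree) :=
        Module.Finite.equiv (degreeLTEquiv k q.natDegree).symm
      have := Submodule.finiteDimensional_of_le hle
      exact Module.Finite.iff_fg.1 this
    · rintro _ ⟨_, ⟨p, rfl⟩, rfl⟩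
      exact ⟨X * p, by simp [hφ]⟩
  · rintro ⟨W, hW, hS, ha⟩
    have : Module.Finite k W := Module.Finite.iff_fg.2 hW
    have hS' : ∀ x ∈ W, shiftEnd k A x ∈ W := fun x hx => hS ⟨x, hx, rfl⟩
    obtain ⟨q, hq, h⟩ : ∃ q : k[X], q ≠ 0 ∧ aeval ((shiftEnd k A).restrict hS') q = 0 :=
      ⟨_, (LinearMap.charpoly_monic _).ne_zero, LinearMap.aeval_self_charpoly _⟩
    refine ⟨q, hq, ?_⟩
    have key (p : k[X]) : ((aeval ((shiftEnd k A).restrict hS') p ⟨a, ha⟩ : W) : ℕ → A) =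
        aeval (shiftEnd k A) p a := by
      induction p using Polynomial.induction_on' with
      | add p q hp hq => simp [hp, hq]
      | monomial n c =>
        rw [aeval_monomial, aeval_monomial, Module.End.pow_restrict]
        rfl
    rw [← key, h]; rfl

variable (k A) in
/-- The recurrent sequences form a subalgebra of `ℕ → A` under pointwise operations: if `V` and `W`
are finite-dimensional and shift-stable, so are `V ⊔ W` and, the shift being multiplicative,
`V * W`. -/
def recurrentSubalgebra : Subalgebra k (ℕ → A) where
  carrier := {a | IsRecurrent k a}
  mul_mem' := by
    intro a b ha hb
    simp only [Set.mem_ofPred_eq, isRecurrent_iff_submodule] at *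
    obtain ⟨V, hV, hSV, haV⟩ := ha
    obtain ⟨W, hW, hSW, hbW⟩ := hb
    refine ⟨V * W, hV.mul hW, ?_, Submodule.mul_mem_mul haV hbW⟩
    rw [Submodule.map_mul]
    exact mul_le_mul' hSV hSW
  add_mem' := by
    intro a b ha hb
    simp only [Set.mem_ofPred_eq, isRecurrent_iff_submodule] at *
    obtain ⟨V, hV, hSV, haV⟩ := ha
    obtain ⟨W, hW, hSW, hbW⟩ := hb
    refine ⟨V ⊔ W, hV.sup hW, ?_,
      add_mem (Submodule.mem_sup_left haV) (Submodule.mem_sup_right hbW)⟩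
    rw [Submodule.map_sup]
    exact sup_le_sup hSV hSW
  algebraMap_mem' c := ⟨X - 1, X_sub_C_ne_zero 1, by ext n; simp⟩

lemma isRecurrent_of_eventually_periodic (a : ℕ → A) (N r : ℕ) (hr : 0 < r)
    (h : ∀ n > N, a (n + r) = a n) : IsRecurrent k a := by
  refine ⟨X ^ (N + 1) * (X ^ r - 1),
    mul_ne_zero (pow_ne_zero _ X_ne_zero) (X_pow_sub_C_ne_zero hr 1), ?_⟩
  ext n
  simp only [map_mul, map_pow, aeval_X, map_sub, map_one, Module.End.mul_apply,
    shiftEnd_pow_apply, LinearMap.sub_apply, Module.End.one_apply, Pi.sub_apply, Pi.zero_apply]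
  rw [h _ (by omega), sub_self]

lemma IsRecurrent.map_algebraMap {a : ℕ → k} (ha : IsRecurrent k a) :
    IsRecurrent k (fun n => algebraMap k A (a n)) := by
  obtain ⟨q, hq, h⟩ := ha
  refine ⟨q, hq, ?_⟩
  have key (p : k[X]) (n : ℕ) : aeval (shiftEnd k A) p (fun n => algebraMap k A (a n)) n =
      algebraMap k A (aeval (shiftEnd k k) p a n) := by
    induction p using Polynomial.induction_on' with
    | add p q hp hq => simp [hp, hq]
    | monomial i c =>
      simp [aeval_monomial, shiftEnd_pow_apply, Algebra.smul_def]
  ext n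
  rw [key, h]
  simp

end Shift

/-- If `H` is the stabilizer of `x`, the conjugates of `x` are enumerated without repetition by a set
of representatives of `G / H`. -/
lemma minpoly_map_eq_prod {K L : Type*} [Field K] [Field L]
    [Algebra K L] [FiniteDimensional K L] [IsGalois K L] (x : L) (H : Subgroup (L ≃ₐ[K] L))
    [Fintype ((L ≃ₐ[K] L) ⧸ H)]
    (hH : ∀ σ, σ ∈ H ↔ σ x = x) :
    (minpoly K x).map (algebraMap K L) =
      ∏ c : (L ≃ₐ[K] L) ⧸ H, (X - C (c.out x)) := by
  classical
  have hinj : Function.Injective (fun c : (L ≃ₐ[K] L) ⧸ H => c.out x) := by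
    intro c d hcd
    dsimp only at hcd
    rw [← Quotient.out_eq c, ← Quotient.out_eq d]
    refine QuotientGroup.eq.2 ((hH _).2 ?_)
    rw [AlgEquiv.mul_apply, ← hcd]
    exact (Quotient.out c).symm_apply_apply x
  have hx : IsIntegral K x := Algebra.IsIntegral.isIntegral x
  have hne : (minpoly K x).map (algebraMap K L) ≠ 0 :=
    Polynomial.map_ne_zero (minpoly.ne_zero hx)
  have hnodup : ((minpoly K x).map (algebraMap K L)).roots.Nodup :=
    nodup_roots (Polynomial.Separable.map (IsGalois.separable K x))
  have hroots : ((minpoly K x).map (algebraMap K L)).roots.toFinset =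
      Finset.univ.image (fun c : (L ≃ₐ[K] L) ⧸ H => c.out x) := by
    ext y
    simp only [Multiset.mem_toFinset, mem_roots hne, Finset.mem_image, Finset.mem_univ, true_and]
    constructor
    · intro hy
      have hmin : minpoly K x = minpoly K y := 
        minpoly.eq_of_irreducible_of_monic (minpoly.irreducible hx)
          (by simpa [IsRoot, eval_map_algebraMap] using hy) (minpoly.monic hx)
      obtain ⟨σ, hσ⟩ := (Normal.minpoly_eq_iff_mem_orbit (E := L)).1 hmin.symm
      refine ⟨QuotientGroup.mk σ, ?_⟩
      obtain ⟨h, hh⟩ := QuotientGroup.mk_out_eq_mul H σ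
      rw [hh, AlgEquiv.mul_apply, (hH _).1 h.2]
      exact hσ
    · rintro ⟨c, rfl⟩
      rw [IsRoot, eval_map_algebraMap, aeval_algHom_apply, minpoly.aeval, map_zero]
  calc (minpoly K x).map (algebraMap K L)
      = (((minpoly K x).map (algebraMap K L)).roots.map (X - C ·)).prod :=
        (IsGalois.splits K x).eq_prod_roots_of_monic ((minpoly.monic hx).map _)
    _ = ∏ y ∈ ((minpoly K x).map (algebraMap K L)).roots.toFinset, (X - C y) := by
        rw [Finset.prod, Multiset.toFinset_val, hnodup.dedup]
    _ = _ := by rw [hroots, Finset.prod_image hinj.injOn]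

/-- Let `L/K` be finite Galois and `(aₙ)` a sequence in `L` such that for each `σ`
in the Galois group, `{n | σ(aₙ) = aₙ}` is virtually periodic and `(σ(aₙ))ₙ` is a
rational sequence. Then the sequence of minimal polynomials `Pₙ(T)` of `aₙ` over
`K` (viewed in `L[T]`) is a rational sequence: there are `F ∈ (L[T])[x]` and
`G ∈ L[x]`, `G ≠ 0`, with `G(x) * ∑ Pₙ(T) xⁿ = F(x)` as power series over `L[T]`. -/
theorem minpoly_seq_rational_of_fixed_sets {K L : Type*} [Field K] [Field L]
    [Algebra K L] [FiniteDimensional K L] [IsGalois K L]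
    (a : ℕ → L)
    (hfix : ∀ σ : L ≃ₐ[K] L, ∃ N r : ℕ, 0 < r ∧
      ∀ n > N, (σ (a n) = a n ↔ σ (a (n + r)) = a (n + r)))
    (hrat : ∀ σ : L ≃ₐ[K] L, IsRationalSeq (fun n => σ (a n))) :
    ∃ F : Polynomial (Polynomial L), ∃ G : Polynomial L, G ≠ 0 ∧
      ((G.map (Polynomial.C : L →+* Polynomial L) : Polynomial (Polynomial L)) :
          PowerSeries (Polynomial L)) *
        PowerSeries.mk (fun n => (minpoly K (a n)).map (algebraMap K L)) =
      (F : PowerSeries (Polynomial L)) := by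
  classical
  let R := recurrentSubalgebra L L[X]
  -- `e σ` is the indicator sequence of the indices `n` at which `σ` fixes `a n`.
  let e : (L ≃ₐ[K] L) → ℕ → L[X] := fun σ n => if σ (a n) = a n then 1 else 0
  have he (σ) : e σ ∈ R := by
    obtain ⟨N, r, hr, h⟩ := hfix σ
    refine isRecurrent_of_eventually_periodic _ N r hr fun n hn => ?_
    simp only [e, h n hn]
  let lin : (L ≃ₐ[K] L) → ℕ → L[X] := fun σ n => X - C (σ (a n))
  have hlin (σ) : lin σ ∈ R := by
    refine R.sub_mem (x := fun _ => X) (y := fun n => C (σ (a n)))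
      (isRecurrent_of_eventually_periodic _ 0 1 one_pos fun _ _ => rfl) ?_
    refine IsRecurrent.map_algebraMap ((isRecurrent_iff_powerSeries _).2 ?_)
    obtain ⟨f, g, hg, h⟩ := hrat σ
    exact ⟨f, g, hg, by simpa using h⟩
  -- The product over `σ` is the indicator of the indices `n` at which the stabilizer of `a n` is `H`.
  have key : (fun n => (minpoly K (a n)).map (algebraMap K L)) =
      ∑ H : Subgroup (L ≃ₐ[K] L),
        (∏ σ : L ≃ₐ[K] L, if σ ∈ H then e σ else 1 - e σ) *
          ∏ c : (L ≃ₐ[K] L) ⧸ H, lin c.out := by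
    funext n
    rw [Finset.sum_apply,
      Finset.sum_eq_single_of_mem (MulAction.stabilizer (L ≃ₐ[K] L) (a n)) (Finset.mem_univ _)]
    · rw [Pi.mul_apply, Finset.prod_apply, Finset.prod_apply, Finset.prod_eq_one, one_mul]
      · exact minpoly_map_eq_prod (a n) _ fun σ => Iff.rfl
      · intro σ _
        by_cases h : σ (a n) = a n <;> simp [e, h, MulAction.mem_stabilizer_iff]
    · intro H _ hH
      obtain ⟨σ, hσ⟩ : ∃ σ : L ≃ₐ[K] L, ¬ (σ ∈ H ↔ σ (a n) = a n) := by
        by_contra! hcon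
        exact hH (Subgroup.ext hcon)
      rw [Pi.mul_apply, Finset.prod_apply, Finset.prod_eq_zero (Finset.mem_univ σ), zero_mul]
      by_cases h : σ (a n) = a n <;> by_cases h' : σ ∈ H <;> simp_all [e]
  have hmem : (fun n => (minpoly K (a n)).map (algebraMap K L)) ∈ R := by
    rw [key]
    refine R.sum_mem fun H _ => R.mul_mem (R.prod_mem fun σ _ => ?_)
      (R.prod_mem fun c _ => hlin c.out)
    split_ifs
    exacts [he σ, R.sub_mem R.one_mem (he σ)]
  exact (isRecurrent_iff_powerSeries _).1 hmem
end
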